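/- Let G be a connected graph on n vertices with diameter d ≥ 2, and suppose n ≥ d^(2d−2). Then h(G) ≥ (1/2)·n^(1/(2d−2)). -/

import Mathlib

open Finset

/-- The multiset of pairwise distances between distinct vertices of `S` in `G`
(one entry for each unordered pair of distinct vertices of `S`). -/
noncomputable def distMultiset {V : Type*} (G : SimpleGraph V) (S : Finset V) : Multiset ℕ :=
  letI := Classical.decEq V
  (S.sym2.filter fun p => ¬ p.IsDiag).val.map
    (Sym2.lift ⟨fun a b => G.dist a b, fun _ _ => SimpleGraph.dist_comm⟩)

/-- Two disjoint vertex sets are homometric if their distance multisets coincide. -/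
def Homometric {V : Type*} (G : SimpleGraph V) (S₁ S₂ : Finset V) : Prop :=
  Disjoint S₁ S₂ ∧ distMultiset G S₁ = distMultiset G S₂

/-- `h(G)`: the largest `h` such that `G` contains two disjoint homometric sets of
size `h` each. -/
noncomputable def homNumber {V : Type*} (G : SimpleGraph V) : ℕ :=
  sSup {h : ℕ | ∃ S₁ S₂ : Finset V, Homometric G S₁ S₂ ∧ S₁.card = h ∧ S₂.card = h}

/-!
Colour each `k`-set `S` of vertices by the numbers of pairs in `S` at distance `1, …, d - 1`. As `S`
has `k.choose 2` pairs, the number of pairs at distance `d` is determined as well, so disjoint sets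
of the same colour are homometric. There are at most `(k.choose 2 + 1) ^ (d - 1)` colours, and by
Kneser's theorem two disjoint `k`-sets share a colour unless there are more than `n - 2 * k + 1`
colours. With `k = h(G) + 1` this gives `n ≤ (2 * h(G)) ^ (2 * d - 2)`.

Kneser's theorem is deduced, following Matoušek, from the octahedral Tucker lemma: a colouring
without disjoint sets of the same colour yields an antipodal labelling of the sign vectors with too
few labels. For Tucker's lemma, let `α ε` be the modulo 2 cochain which indicates the chains with
labels of increasing magnitude and signs `ε, -ε, ε, …`. Then `δ (α ε) = α ε + α (-ε)`, and
`α (-ε)` is the image of `α ε` under the antipode, so summing over a hemisphere shows that the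
number of `ε`-alternating facets has the same parity in all dimensions. Hence it is odd.
-/

section Alternating

variable {ι M : Type*} [LinearOrder M] {m m' : ι → M} {s s' : ι → ℤˣ} {ε : ℤˣ} {I : Finset ι}

/-- The signed labels with signs `s i` and magnitudes `m i`, for `i ∈ I`, form an alternating
family: the magnitudes are distinct and, listed by increasing magnitude, the signs are
`ε, -ε, ε, …`. -/
def IsAlternating (ε : ℤˣ) (m : ι → M) (s : ι → ℤˣ) (I : Finset ι) : Prop :=
  Set.InjOn m I ∧ ∀ i ∈ I, s i = ε * (-1) ^ #{j ∈ I | m j < m i}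

open Classical in
/-- The alternating cochain: the indicator of `IsAlternating`, as a cochain modulo 2. -/
noncomputable def altCochain (ε : ℤˣ) (m : ι → M) (s : ι → ℤˣ) (I : Finset ι) : ZMod 2 :=
  if IsAlternating ε m s I then 1 else 0

open Classical in
lemma altCochain_eq_of_iff {ε' : ℤˣ} {J : Finset ι}
    (h : IsAlternating ε m s I ↔ IsAlternating ε' m' s' J) :
    altCochain ε m s I = altCochain ε' m' s' J :=
  if_congr h rfl rfl

lemma altCochain_empty : altCochain ε m s ∅ = 1 := by
  simp [altCochain, IsAlternating]

lemma altCochain_eq_zero_of_not_injOn (h : ¬ Set.InjOn m I) : altCochain ε m s I = 0 :=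
  if_neg fun h' => h h'.1

lemma altCochain_congr (hm : ∀ i ∈ I, m i = m' i) (hs : ∀ i ∈ I, s i = s' i) :
    altCochain ε m s I = altCochain ε m' s' I := by
  have hrank : ∀ i ∈ I, #{j ∈ I | m j < m i} = #{j ∈ I | m' j < m' i} := fun i hi =>
    congrArg card (filter_congr fun j hj => by rw [hm i hi, hm j hj])
  exact altCochain_eq_of_iff (and_congr (Set.EqOn.injOn_iff hm)
    (forall₂_congr fun i hi => by rw [hs i hi, hrank i hi]))

lemma altCochain_neg_sign : altCochain ε m (-s) I = altCochain (-ε) m s I :=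
  altCochain_eq_of_iff (and_congr_right fun _ => forall₂_congr fun i _ => by
    rw [Pi.neg_apply, neg_mul, neg_eq_iff_eq_neg])

variable [DecidableEq ι] {a b : ι}

lemma isAlternating_insert_of_forall_lt (h : ∀ i ∈ I, m i < m a) :
    IsAlternating ε m s (insert a I) ↔ IsAlternating ε m s I ∧ s a = ε * (-1) ^ #I := by
  have hrank : ∀ i ∈ I, ({j ∈ insert a I | m j < m i} : Finset ι) = {j ∈ I | m j < m i} :=
    fun i hi => by rw [filter_insert, if_neg (h i hi).not_gt]
  have hrank_a : ({j ∈ insert a I | m j < m a} : Finset ι) = I := by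
    rw [filter_insert, if_neg (lt_irrefl _), filter_true_of_mem h]
  have hinj : Set.InjOn m (insert a I : Finset ι) ↔ Set.InjOn m I := by
    rw [coe_insert, Set.injOn_insert fun ha => (h a ha).false, and_iff_left]
    rintro ⟨i, hi, hia⟩
    exact (h i hi).ne hia
  rw [IsAlternating, forall_mem_insert, hrank_a, hinj, IsAlternating, and_assoc,
    and_comm (a := s a = _)]
  refine and_congr_right fun _ => and_congr_left fun _ => forall₂_congr fun i hi => ?_
  rw [hrank i hi]

open Classical in
lemma altCochain_insert_of_forall_lt (h : ∀ i ∈ I, m i < m a) :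
    altCochain ε m s (insert a I) =
      altCochain ε m s I * if s a = ε * (-1) ^ #I then 1 else 0 := by
  simp only [altCochain, ite_zero_mul_ite_zero, mul_one]
  exact if_congr (isAlternating_insert_of_forall_lt h) rfl rfl

lemma altCochain_insert_eq (ha : a ∉ I) (hb : b ∉ I) (hm : m a = m b) (hs : s a = s b) :
    altCochain ε m s (insert a I) = altCochain ε m s (insert b I) := by
  have hrank (x : M) : #{j ∈ insert a I | m j < x} = #{j ∈ insert b I | m j < x} := by
    simp only [filter_insert, hm]
    split_ifs <;> simp [ha, hb]
  refine altCochain_eq_of_iff ?_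
  simp only [IsAlternating, forall_mem_insert, hrank, hm, hs, coe_insert,
    Set.injOn_insert (mt mem_coe.1 ha), Set.injOn_insert (mt mem_coe.1 hb)]

lemma sum_altCochain_erase_of_injOn (hm : Set.InjOn m I) :
    ∑ i ∈ I, altCochain ε m s (I.erase i) = altCochain ε m s I + altCochain (-ε) m s I := by
  induction I using Finset.induction_on_max_value m with
  | empty => simp only [sum_empty, altCochain_empty, CharTwo.add_self_eq_zero]
  | insert a I ha hmax ih =>
    have hlt : ∀ i ∈ I, m i < m a := fun i hi => (hmax i hi).lt_of_ne fun h =>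
      ha (hm (mem_insert_of_mem hi) (mem_insert_self a I) h ▸ hi)
    have hterm : ∀ i ∈ I, altCochain ε m s ((insert a I).erase i) =
        altCochain ε m s (I.erase i) * if s a = -ε * (-1) ^ #I then 1 else 0 := by
      intro i hi
      rw [erase_insert_of_ne (ne_of_mem_of_not_mem hi ha).symm,
        altCochain_insert_of_forall_lt fun j hj => hlt j (mem_of_mem_erase hj),
        ← card_erase_add_one hi, pow_succ, mul_neg_one, neg_mul_neg]
    rw [sum_insert ha, erase_insert ha, sum_congr rfl hterm, ← sum_mul,
      ih (hm.mono (subset_insert a I)), altCochain_insert_of_forall_lt hlt,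
      altCochain_insert_of_forall_lt hlt, neg_mul]
    by_cases h : s a = ε * (-1) ^ #I
    · have hne : s a ≠ -(ε * (-1) ^ #I) := Int.units_ne_iff_eq_neg.2 (by rw [neg_neg, h])
      rw [if_pos h, if_neg hne]
      ring
    · rw [if_neg h, if_pos (Int.units_ne_iff_eq_neg.1 h), mul_one, ← add_assoc,
        CharTwo.add_self_eq_zero]
      ring

/-- In terms of cochains, with `α ε` for the `ε`-alternating cochain: `δ (α ε) = α ε + α (-ε)`. -/
lemma sum_altCochain_erase (h : ∀ i ∈ I, ∀ j ∈ I, m i = m j → s i = s j) :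
    ∑ i ∈ I, altCochain ε m s (I.erase i) = altCochain ε m s I + altCochain (-ε) m s I := by
  by_cases hm : Set.InjOn m I
  · exact sum_altCochain_erase_of_injOn hm
  obtain ⟨i, hi, j, hj, hij, hne⟩ : ∃ i ∈ I, ∃ j ∈ I, m i = m j ∧ i ≠ j := by
    simpa [Set.InjOn] using hm
  have hrest : ∀ a ∈ (I.erase i).erase j, altCochain ε m s (I.erase a) = 0 := fun a ha =>
    altCochain_eq_zero_of_not_injOn fun hinj =>
      hne (hinj (by simp_all [eq_comm]) (by simp_all [eq_comm]) hij)
  have hji : j ∈ I.erase i := mem_erase.2 ⟨hne.symm, hj⟩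
  have hij' : i ∈ I.erase j := mem_erase.2 ⟨hne, hi⟩
  have hpair : altCochain ε m s (I.erase i) = altCochain ε m s (I.erase j) := by
    rw [← insert_erase hji, ← insert_erase hij', erase_right_comm (a := j)]
    exact altCochain_insert_eq (by simp) (by simp) hij.symm (h i hi j hj hij).symm
  rw [← add_sum_erase I _ hi, ← add_sum_erase _ _ hji, sum_eq_zero hrest, hpair, add_zero,
    CharTwo.add_self_eq_zero, altCochain_eq_zero_of_not_injOn hm,
    altCochain_eq_zero_of_not_injOn hm, add_zero]

end Alternating

section Tucker

/-- `X` is a face of `Y` in the poset of sign vectors: `Y` arises from `X` by giving signs to some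
zero coordinates. -/
def IsFace {α : Type*} (X Y : α → SignType) : Prop :=
  ∀ a, X a ≠ 0 → Y a = X a

/-- A labelling of the nonzero sign vectors as in the octahedral Tucker lemma. The label of `X` is
split into a sign `sgn X` and a magnitude `mag X`, so the label `-l` has the magnitude of `l` and
the opposite sign; `sgn_eq` says that no two comparable sign vectors have opposite labels. -/
structure IsTuckerLabelling {α M : Type*} (mag : (α → SignType) → M)
    (sgn : (α → SignType) → ℤˣ) : Prop where
  mag_neg : ∀ X ≠ 0, mag (-X) = mag X
  sgn_neg : ∀ X ≠ 0, sgn (-X) = -sgn X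
  sgn_eq : ∀ X Y, X ≠ 0 → IsFace X Y → mag X = mag Y → sgn X = sgn Y

/-- A signed permutation `(σ, s)` encodes the maximal chain of nonzero sign vectors which gives
the coordinates their signs `s` in the order of their ranks `σ`. These chains are the facets of
the barycentric subdivision of the cross-polytope boundary. -/
abbrev SignedPerm (N : ℕ) := Equiv.Perm (Fin N) × (Fin N → ℤˣ)

namespace SignedPerm

variable {N : ℕ} {f g : SignedPerm N} {i j d : ℕ} {z : Fin N}

/-- The `i`-th sign vector of the chain encoded by `f`, with `i + 1` nonzero coordinates. -/
noncomputable def level (f : SignedPerm N) (i : ℕ) : Fin N → SignType := fun x =>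
  if (f.1 x : ℕ) ≤ i then SignType.sign (f.2 x : ℤ) else 0

lemma level_ne_zero (hN : 0 < N) (f : SignedPerm N) (i : ℕ) : f.level i ≠ 0 := by
  intro h
  have hfirst := congrFun h (f.1.symm ⟨0, hN⟩)
  simp [level] at hfirst

lemma isFace_level (h : i ≤ j) (f : SignedPerm N) : IsFace (f.level i) (f.level j) := by
  intro x hx
  have hxi : (f.1 x : ℕ) ≤ i := by
    by_contra hxi
    exact hx (if_neg hxi)
  rw [level, level, if_pos hxi, if_pos (hxi.trans h)]

lemma level_congr (hrank : ∀ x, (g.1 x : ℕ) ≤ i ↔ (f.1 x : ℕ) ≤ i)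
    (hsign : ∀ x, (f.1 x : ℕ) ≤ i → g.2 x = f.2 x) : g.level i = f.level i := by
  funext x
  by_cases hx : (f.1 x : ℕ) ≤ i
  · rw [level, level, if_pos hx, if_pos ((hrank x).2 hx), hsign x hx]
  · rw [level, level, if_neg hx, if_neg (mt (hrank x).1 hx)]

/-- The facets of the sphere spanned by the first `d` coordinates. The remaining coordinates carry
no information and are normalized. -/
def sphere (N d : ℕ) : Finset (SignedPerm N) :=
  {f | ∀ x : Fin N, d ≤ x → f.1 x = x ∧ f.2 x = 1}

/-- The facets of the hemisphere of `sphere N (z + 1)` on which the last coordinate `z` is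
positive. Its boundary is `sphere N z`. -/
def hemisphere (z : Fin N) : Finset (SignedPerm N) :=
  {f ∈ sphere N (z + 1) | f.2 z = 1}

lemma mem_sphere : f ∈ sphere N d ↔ ∀ x : Fin N, d ≤ x → f.1 x = x ∧ f.2 x = 1 := by
  simp [sphere]

lemma mem_hemisphere : f ∈ hemisphere z ↔ f ∈ sphere N (z + 1) ∧ f.2 z = 1 := mem_filter

lemma sphere_zero : sphere N 0 = {1} := by
  ext f
  simp [mem_sphere, Prod.ext_iff, Equiv.ext_iff, funext_iff, forall_and]

lemma rank_lt_iff (hf : f ∈ sphere N d) (x : Fin N) : (f.1 x : ℕ) < d ↔ (x : ℕ) < d := by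
  rw [mem_sphere] at hf
  rw [← not_le, ← not_le, not_iff_not]
  refine ⟨fun h => ?_, fun h => (hf x h).1.symm ▸ h⟩
  rwa [f.1.injective (hf (f.1 x) h).1] at h

lemma filter_hemisphere_rank_eq : {f ∈ hemisphere z | f.1 z = z} = sphere N z := by
  ext f
  simp only [mem_filter, mem_hemisphere, mem_sphere]
  refine ⟨fun ⟨⟨hf, hs⟩, hz⟩ x hx => ?_, fun hf =>
    ⟨⟨fun x hx => hf x (by omega), (hf z le_rfl).2⟩, (hf z le_rfl).1⟩⟩
  rcases hx.eq_or_lt with h | h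
  · exact Fin.ext h ▸ ⟨hz, hs⟩
  · exact hf x h

/-- The antipode on `sphere N d`. -/
def antipode (d : ℕ) (f : SignedPerm N) : SignedPerm N :=
  (f.1, fun x => if (x : ℕ) < d then -f.2 x else f.2 x)

lemma antipode_antipode (d : ℕ) (f : SignedPerm N) : antipode d (antipode d f) = f := by
  refine Prod.ext rfl (funext fun x => ?_)
  simp only [antipode]
  split_ifs <;> simp

lemma antipode_mem_sphere (hf : f ∈ sphere N d) : antipode d f ∈ sphere N d := by
  rw [mem_sphere] at *
  intro x hx
  simp only [antipode, if_neg hx.not_gt, hf x hx, and_self]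

lemma level_antipode (hf : f ∈ sphere N d) (hi : i < d) :
    (antipode d f).level i = -f.level i := by
  funext x
  by_cases hx : (f.1 x : ℕ) ≤ i
  · have hxd : (x : ℕ) < d := (rank_lt_iff hf x).1 (hx.trans_lt hi)
    simp [level, antipode, hx, hxd, Left.sign_neg]
  · simp [level, antipode, hx]

/-- Exchanging the ranks `a` and `b`. -/
def swapRanks (a b : Fin N) (f : SignedPerm N) : SignedPerm N :=
  (Equiv.swap a b * f.1, f.2)

lemma swapRanks_swapRanks (a b : Fin N) (f : SignedPerm N) :
    swapRanks a b (swapRanks a b f) = f := by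
  simp [swapRanks]

lemma swapRanks_ne {a b : Fin N} (hab : a ≠ b) (f : SignedPerm N) : swapRanks a b f ≠ f :=
  fun h => hab (Equiv.swap_eq_one_iff.1 (mul_eq_right.1 (congrArg Prod.fst h)))

lemma swapRanks_mem_sphere {a b : Fin N} (ha : (a : ℕ) < d) (hb : (b : ℕ) < d)
    (hf : f ∈ sphere N d) : swapRanks a b f ∈ sphere N d := by
  rw [mem_sphere] at *
  refine fun x hx => ⟨?_, (hf x hx).2⟩
  rw [swapRanks, Equiv.Perm.mul_apply, (hf x hx).1]
  exact Equiv.swap_apply_of_ne_of_ne (by omega) (by omega)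

lemma level_swapRanks {a b : Fin N} (hab : (b : ℕ) = a + 1) (hi : i ≠ a) (f : SignedPerm N) :
    (swapRanks a b f).level i = f.level i := by
  refine level_congr (fun x => ?_) fun _ _ => rfl
  rw [swapRanks, Equiv.Perm.mul_apply, Equiv.swap_apply_def]
  split_ifs with ha hb
  · rw [ha]; omega
  · rw [hb]; omega
  · rfl

/-- Reversing the sign of the coordinate of rank `z`. -/
def flipSign (z : Fin N) (f : SignedPerm N) : SignedPerm N :=
  (f.1, Function.update f.2 (f.1.symm z) (-f.2 (f.1.symm z)))

lemma flipSign_flipSign (z : Fin N) (f : SignedPerm N) : flipSign z (flipSign z f) = f := by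
  simp [flipSign]

lemma flipSign_ne (z : Fin N) (f : SignedPerm N) : flipSign z f ≠ f := by
  intro h
  have hsign := congrFun (congrArg Prod.snd h) (f.1.symm z)
  simp only [flipSign, Function.update_self] at hsign
  exact units_ne_neg_self _ hsign.symm

lemma flipSign_mem_hemisphere (hf : f ∈ hemisphere z) (hz : f.1 z ≠ z) :
    flipSign z f ∈ hemisphere z := by
  rw [mem_hemisphere] at *
  have hne : z ≠ f.1.symm z := fun h => hz ((Equiv.eq_symm_apply _).1 h)
  have hlt : (f.1.symm z : ℕ) < z + 1 := (rank_lt_iff hf.1 _).1 (by simp)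
  refine ⟨mem_sphere.2 fun x hx => ⟨(mem_sphere.1 hf.1 x hx).1, ?_⟩, ?_⟩
  · exact (Function.update_of_ne (by rintro rfl; omega) _ _).trans (mem_sphere.1 hf.1 x hx).2
  · exact (Function.update_of_ne hne _ _).trans hf.2

lemma level_flipSign (hi : i < z) (f : SignedPerm N) :
    (flipSign z f).level i = f.level i := by
  refine level_congr (fun _ => Iff.rfl) fun x hx => Function.update_of_ne ?_ _ _
  rintro rfl
  rw [Equiv.apply_symm_apply] at hx
  omega

section Fan

variable {M : Type*} [LinearOrder M] {mag : (Fin N → SignType) → M}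
  {sgn : (Fin N → SignType) → ℤˣ} {ε : ℤˣ}

/-- The value of the alternating cochain on the face of the chain `f` with the levels `I`. -/
noncomputable def chainCochain (mag : (Fin N → SignType) → M) (sgn : (Fin N → SignType) → ℤˣ)
    (ε : ℤˣ) (I : Finset ℕ) (f : SignedPerm N) : ZMod 2 :=
  altCochain ε (fun i => mag (f.level i)) (fun i => sgn (f.level i)) I

lemma chainCochain_congr {I : Finset ℕ} (h : ∀ i ∈ I, g.level i = f.level i) :
    chainCochain mag sgn ε I g = chainCochain mag sgn ε I f :=
  altCochain_congr (fun i hi => by rw [h i hi]) fun i hi => by rw [h i hi]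

lemma sum_chainCochain_erase (h : IsTuckerLabelling mag sgn) (hN : 0 < N) (I : Finset ℕ)
    (f : SignedPerm N) :
    ∑ j ∈ I, chainCochain mag sgn ε (I.erase j) f =
      chainCochain mag sgn ε I f + chainCochain mag sgn (-ε) I f := by
  refine sum_altCochain_erase fun i _ j _ hij => ?_
  rcases le_total i j with hle | hle
  · exact h.sgn_eq _ _ (level_ne_zero hN f i) (isFace_level hle f) hij
  · exact (h.sgn_eq _ _ (level_ne_zero hN f j) (isFace_level hle f) hij.symm).symm

lemma chainCochain_antipode (h : IsTuckerLabelling mag sgn) (hN : 0 < N)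
    (hf : f ∈ sphere N d) :
    chainCochain mag sgn ε (range d) (antipode d f) =
      chainCochain mag sgn (-ε) (range d) f := by
  rw [chainCochain, chainCochain, ← altCochain_neg_sign]
  refine altCochain_congr (fun i hi => ?_) fun i hi => ?_
  all_goals rw [level_antipode hf (mem_range.1 hi)]
  · exact h.mag_neg _ (level_ne_zero hN f i)
  · exact h.sgn_neg _ (level_ne_zero hN f i)

lemma sum_sphere_chainCochain_eq_sum_hemisphere (h : IsTuckerLabelling mag sgn) (z : Fin N) :
    ∑ f ∈ sphere N (z + 1), chainCochain mag sgn ε (range (z + 1)) f =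
      ∑ f ∈ hemisphere z, (chainCochain mag sgn ε (range (z + 1)) f +
        chainCochain mag sgn (-ε) (range (z + 1)) f) := by
  rw [← sum_filter_add_sum_filter_not (sphere N (z + 1)) (fun f => f.2 z = 1), sum_add_distrib]
  refine congrArg₂ _ rfl (sum_bij' (fun f _ => antipode (z + 1) f)
    (fun f _ => antipode (z + 1) f) ?_ ?_ (fun f _ => antipode_antipode _ f)
    (fun f _ => antipode_antipode _ f) ?_)
  · intro f hf
    rw [mem_filter, ← ne_eq, Int.units_ne_iff_eq_neg] at hf
    exact mem_hemisphere.2 ⟨antipode_mem_sphere hf.1, by simp [antipode, hf.2]⟩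
  · intro f hf
    rw [mem_hemisphere] at hf
    rw [mem_filter, ← ne_eq, Int.units_ne_iff_eq_neg]
    exact ⟨antipode_mem_sphere hf.1, by simp [antipode, hf.2]⟩
  · intro f hf
    rw [chainCochain_antipode h z.pos (mem_filter.1 hf).1, neg_neg]

/-- Chains which differ only at level `j` come in pairs. -/
lemma sum_hemisphere_chainCochain_erase_of_lt (hj : j < z) :
    ∑ f ∈ hemisphere z, chainCochain mag sgn ε ((range (z + 1)).erase j) f = 0 := by
  obtain ⟨a, rfl⟩ : ∃ a : Fin N, (a : ℕ) = j := ⟨⟨j, hj.trans z.2⟩, rfl⟩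
  obtain ⟨b, hb⟩ : ∃ b : Fin N, (b : ℕ) = a + 1 := ⟨⟨a + 1, by omega⟩, rfl⟩
  refine sum_involution (fun f _ => swapRanks a b f) ?_ (fun f _ _ => swapRanks_ne (by omega) f)
    ?_ fun f _ => swapRanks_swapRanks a b f
  · intro f _
    rw [chainCochain_congr fun i hi => level_swapRanks hb (ne_of_mem_erase hi) f,
      CharTwo.add_self_eq_zero]
  · intro f hf
    rw [mem_hemisphere] at *
    exact ⟨swapRanks_mem_sphere (by omega) (by omega) hf.1, hf.2⟩

lemma sum_hemisphere_chainCochain_range (z : Fin N) :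
    ∑ f ∈ hemisphere z, chainCochain mag sgn ε (range z) f =
      ∑ f ∈ sphere N z, chainCochain mag sgn ε (range z) f := by
  rw [← sum_filter_add_sum_filter_not (hemisphere z) (fun f => f.1 z = z),
    filter_hemisphere_rank_eq, add_eq_left]
  refine sum_involution (fun f _ => flipSign z f) ?_ (fun f _ _ => flipSign_ne z f) ?_
    fun f _ => flipSign_flipSign z f
  · intro f _
    rw [chainCochain_congr fun i hi => level_flipSign (mem_range.1 hi) f,
      CharTwo.add_self_eq_zero]
  · intro f hf
    rw [mem_filter] at *
    exact ⟨flipSign_mem_hemisphere hf.1 hf.2, hf.2⟩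

lemma sum_sphere_succ_chainCochain (h : IsTuckerLabelling mag sgn) (z : Fin N) :
    ∑ f ∈ sphere N (z + 1), chainCochain mag sgn ε (range (z + 1)) f =
      ∑ f ∈ sphere N z, chainCochain mag sgn ε (range z) f := by
  have hlast : (range (z + 1)).erase (z : ℕ) = range z := by
    rw [range_add_one, erase_insert notMem_range_self]
  calc ∑ f ∈ sphere N (z + 1), chainCochain mag sgn ε (range (z + 1)) f
      = ∑ f ∈ hemisphere z,
          ∑ j ∈ range (z + 1), chainCochain mag sgn ε ((range (z + 1)).erase j) f := by
        simp only [sum_sphere_chainCochain_eq_sum_hemisphere h, sum_chainCochain_erase h z.pos]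
    _ = ∑ j ∈ range z, ∑ f ∈ hemisphere z,
            chainCochain mag sgn ε ((range (z + 1)).erase j) f +
          ∑ f ∈ hemisphere z, chainCochain mag sgn ε (range z) f := by
        rw [sum_comm, sum_range_succ, hlast]
    _ = ∑ f ∈ sphere N z, chainCochain mag sgn ε (range z) f := by
        rw [sum_eq_zero fun j hj => sum_hemisphere_chainCochain_erase_of_lt (mem_range.1 hj),
          zero_add, sum_hemisphere_chainCochain_range]

/-- **Ky Fan's lemma**, modulo 2. -/
theorem sum_sphere_chainCochain (h : IsTuckerLabelling mag sgn) (hd : d ≤ N) :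
    ∑ f ∈ sphere N d, chainCochain mag sgn ε (range d) f = 1 := by
  induction d with
  | zero => rw [sphere_zero, sum_singleton, chainCochain, range_zero, altCochain_empty]
  | succ d ih => rw [sum_sphere_succ_chainCochain h ⟨d, hd⟩, ih (by omega)]

end Fan

end SignedPerm

lemma card_le_of_isTuckerLabelling_fin {N : ℕ} {M : Type*} {mag : (Fin N → SignType) → M}
    {sgn : (Fin N → SignType) → ℤˣ}
    (h : IsTuckerLabelling mag sgn) {T : Finset M} (hT : ∀ X ≠ 0, mag X ∈ T) : N ≤ #T := by
  classical
  let _ : LinearOrder M := linearOrderOfSTO WellOrderingRel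
  obtain ⟨f, -, hf⟩ := exists_ne_zero_of_sum_ne_zero
    ((SignedPerm.sum_sphere_chainCochain (ε := 1) h le_rfl).trans_ne one_ne_zero)
  have hinj : Set.InjOn (fun i => mag (f.level i)) (range N) :=
    not_imp_comm.1 altCochain_eq_zero_of_not_injOn hf
  have hmaps : ∀ i ∈ range N, mag (f.level i) ∈ T := fun i hi =>
    hT _ (SignedPerm.level_ne_zero (by rw [mem_range] at hi; omega) f i)
  simpa using card_le_card_of_injOn _ hmaps hinj

lemma IsTuckerLabelling.comp_equiv {α β M : Type*} {mag : (α → SignType) → M}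
    {sgn : (α → SignType) → ℤˣ} (h : IsTuckerLabelling mag sgn) (e : α ≃ β) :
    IsTuckerLabelling (fun X : β → SignType => mag (X ∘ e)) (fun X => sgn (X ∘ e)) := by
  have hne : ∀ X : β → SignType, X ≠ 0 → X ∘ e ≠ 0 := fun X hX hXe =>
    hX (e.surjective.injective_comp_right hXe)
  exact ⟨fun X hX => h.mag_neg _ (hne X hX), fun X hX => h.sgn_neg _ (hne X hX),
    fun X Y hX hXY => h.sgn_eq _ _ (hne X hX) fun a => hXY (e a)⟩

/-- **Octahedral Tucker lemma.** -/
theorem IsTuckerLabelling.card_le {α M : Type*} [Fintype α] {mag : (α → SignType) → M}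
    {sgn : (α → SignType) → ℤˣ} (h : IsTuckerLabelling mag sgn) {T : Finset M}
    (hT : ∀ X ≠ 0, mag X ∈ T) : Fintype.card α ≤ #T := by
  let e := Fintype.equivFin α
  refine card_le_of_isTuckerLabelling_fin (h.comp_equiv e) fun X hX => hT _ fun hXe => ?_
  exact hX (e.surjective.injective_comp_right hXe)

end Tucker

section Kneser

variable {α β : Type*} {k : ℕ} {col : Finset α → β} {X Y : α → SignType} {c : β}

/-- Some `k`-set on which the sign vector `X` is positive has colour `c`. The `k`-sets on which `X`
is negative are treated as those on which `-X` is positive. -/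
def IsColour (k : ℕ) (col : Finset α → β) (X : α → SignType) (c : β) : Prop :=
  ∃ S : Finset α, #S = k ∧ (∀ a ∈ S, X a = 1) ∧ col S = c

lemma IsFace.neg (h : IsFace X Y) : IsFace (-X) (-Y) := fun a ha => by
  rw [Pi.neg_apply, Pi.neg_apply, h a fun h0 => ha (by rw [Pi.neg_apply, h0, neg_zero])]

lemma IsColour.mono (h : IsColour k col X c) (hXY : IsFace X Y) : IsColour k col Y c := by
  obtain ⟨S, hS, hpos, hc⟩ := h
  exact ⟨S, hS, fun a ha => (hXY a (by rw [hpos a ha]; decide)).trans (hpos a ha), hc⟩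

lemma IsColour.exists_disjoint (h : IsColour k col X c) (h' : IsColour k col (-X) c) :
    ∃ S T : Finset α, Disjoint S T ∧ #S = k ∧ #T = k ∧ col S = col T := by
  obtain ⟨S, hS, hpos, rfl⟩ := h
  obtain ⟨T, hT, hneg, hc⟩ := h'
  refine ⟨S, T, disjoint_left.2 fun a haS haT => ?_, hS, hT, hc.symm⟩
  have hne : -1 = (1 : SignType) := hpos a haS ▸ hneg a haT
  exact absurd hne (by decide)

lemma exists_odd_sign (α : Type*) :
    ∃ s : (α → SignType) → ℤˣ, ∀ X ≠ 0, s (-X) = -s X := by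
  classical
  refine ⟨fun X => if WellOrderingRel X (-X) then 1 else -1, fun X hX => ?_⟩
  have hne : X ≠ -X := fun h => hX (funext fun a => SignType.self_eq_neg_iff.1 (congrFun h a))
  simp only [neg_neg]
  rcases trichotomous_of WellOrderingRel X (-X) with h | h | h
  · rw [if_pos h, if_neg (asymm_of WellOrderingRel h)]
  · exact absurd h hne
  · rw [if_pos h, if_neg (asymm_of WellOrderingRel h), neg_neg]

variable [Fintype α] {γ : (α → SignType) → β} {s : (α → SignType) → ℤˣ}

/-- The set of nonzero coordinates of a sign vector. -/
def signSupport (X : α → SignType) : Finset α := {a | X a ≠ 0}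

lemma mem_signSupport {a : α} : a ∈ signSupport X ↔ X a ≠ 0 := mem_filter_univ a

lemma signSupport_neg (X : α → SignType) : signSupport (-X) = signSupport X := by
  simp [signSupport]

lemma signSupport_nonempty (hX : X ≠ 0) : (signSupport X).Nonempty := by
  obtain ⟨a, ha⟩ := Function.ne_iff.1 hX
  exact ⟨a, mem_signSupport.2 ha⟩

lemma IsFace.signSupport_subset (h : IsFace X Y) : signSupport X ⊆ signSupport Y := fun a ha => by
  rw [mem_signSupport] at *
  rwa [h a ha]

lemma IsFace.eq_of_signSupport_card_le (h : IsFace X Y)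
    (hcard : #(signSupport Y) ≤ #(signSupport X)) : X = Y := by
  have hsupp := eq_of_subset_of_card_le h.signSupport_subset hcard
  funext a
  by_cases ha : a ∈ signSupport X
  · exact (h a (mem_signSupport.1 ha)).symm
  · have haY : a ∉ signSupport Y := hsupp ▸ ha
    rw [mem_signSupport, not_not] at ha haY
    rw [ha, haY]

lemma exists_isColour_or_neg (col : Finset α → β) (hX : 2 * k ≤ #(signSupport X) + 1) :
    ∃ c, IsColour k col X c ∨ IsColour k col (-X) c := by
  classical
  have hsign : ∀ t : SignType, t ≠ 0 → t = 1 ∨ -t = 1 := by decide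
  have hcover : signSupport X ⊆ univ.filter (X · = 1) ∪ univ.filter ((-X) · = 1) := fun a ha =>
    mem_union.2 <| (hsign (X a) (mem_signSupport.1 ha)).imp (mem_filter_univ a).2
      (mem_filter_univ a).2
  have hcard : #(signSupport X) ≤ #{a | X a = 1} + #{a | (-X) a = 1} :=
    (card_le_card hcover).trans (card_union_le _ _)
  obtain h | h : k ≤ #{a | X a = 1} ∨ k ≤ #{a | (-X) a = 1} := by omega
  · obtain ⟨S, hS, hk⟩ := exists_subset_card_eq h
    exact ⟨col S, .inl ⟨S, hk, fun a ha => by simpa using hS ha, rfl⟩⟩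
  · obtain ⟨S, hS, hk⟩ := exists_subset_card_eq h
    exact ⟨col S, .inr ⟨S, hk, fun a ha => by simpa using hS ha, rfl⟩⟩

lemma exists_even_isColour_or_neg (k : ℕ) (col : Finset α → β) :
    ∃ γ : (α → SignType) → β, (∀ X, γ (-X) = γ X) ∧
      ∀ X, 2 * k ≤ #(signSupport X) + 1 → IsColour k col X (γ X) ∨ IsColour k col (-X) (γ X) := by
  have : Nonempty β := ⟨col ∅⟩
  refine ⟨fun X => Classical.epsilon fun c => IsColour k col X c ∨ IsColour k col (-X) c,
    fun X => ?_, fun X hX => Classical.epsilon_spec (exists_isColour_or_neg col hX)⟩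
  simp only [neg_neg, or_comm]

/-- The magnitudes of the labelling for Kneser's theorem: a sign vector with fewer than `2 * k - 1`
nonzero coordinates is labelled by their number, any other by the colour `γ X`. -/
def kneserMag (k : ℕ) (γ : (α → SignType) → β) (X : α → SignType) : ℕ ⊕ β :=
  if 2 * k ≤ #(signSupport X) + 1 then .inr (γ X) else .inl #(signSupport X)

open Classical in
/-- The signs of the labelling for Kneser's theorem: they record whether the colour `γ X` occurs on
the positive side, and are given by `s` if `X` has fewer than `2 * k - 1` nonzero coordinates. -/
noncomputable def kneserSgn (k : ℕ) (col : Finset α → β) (γ : (α → SignType) → β)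
    (s : (α → SignType) → ℤˣ) (X : α → SignType) : ℤˣ :=
  if 2 * k ≤ #(signSupport X) + 1 then if IsColour k col X (γ X) then 1 else -1 else s X

lemma isTuckerLabelling_kneser
    (hcol : ¬ ∃ S T : Finset α, Disjoint S T ∧ #S = k ∧ #T = k ∧ col S = col T)
    (hγ_neg : ∀ X, γ (-X) = γ X)
    (hγ : ∀ X, 2 * k ≤ #(signSupport X) + 1 → IsColour k col X (γ X) ∨ IsColour k col (-X) (γ X))
    (hs : ∀ X ≠ 0, s (-X) = -s X) :
    IsTuckerLabelling (kneserMag k γ) (kneserSgn k col γ s) := by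
  have hnot {X : α → SignType} {c : β} (h : IsColour k col X c) : ¬ IsColour k col (-X) c :=
    fun h' => hcol (h.exists_disjoint h')
  refine ⟨fun X _ => ?_, fun X hX => ?_, fun X Y _ hXY hmag => ?_⟩
  · rw [kneserMag, kneserMag, signSupport_neg, hγ_neg]
  · rw [kneserSgn, kneserSgn, signSupport_neg, hγ_neg]
    by_cases hbig : 2 * k ≤ #(signSupport X) + 1
    · rw [if_pos hbig, if_pos hbig]
      rcases hγ X hbig with h | h
      · rw [if_pos h, if_neg (hnot h)]
      · rw [if_pos h, if_neg fun h' => hnot h' h, neg_neg]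
    · rw [if_neg hbig, if_neg hbig, hs X hX]
  · rw [kneserMag, kneserMag] at hmag
    by_cases hbigX : 2 * k ≤ #(signSupport X) + 1
    · have hbigY : 2 * k ≤ #(signSupport Y) + 1 :=
        hbigX.trans (Nat.succ_le_succ (card_le_card hXY.signSupport_subset))
      rw [if_pos hbigX, if_pos hbigY, Sum.inr.injEq] at hmag
      rw [kneserSgn, kneserSgn, if_pos hbigX, if_pos hbigY, ← hmag]
      rcases hγ X hbigX with h | h
      · rw [if_pos h, if_pos (h.mono hXY)]
      · rw [if_neg fun h' => hnot h' h, if_neg fun h' => hnot h' (h.mono hXY.neg)]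
    · by_cases hbigY : 2 * k ≤ #(signSupport Y) + 1
      · rw [if_neg hbigX, if_pos hbigY] at hmag
        exact absurd hmag Sum.inl_ne_inr
      · rw [if_neg hbigX, if_neg hbigY, Sum.inl.injEq] at hmag
        rw [hXY.eq_of_signSupport_card_le hmag.ge]

/-- **Kneser's conjecture**, proved by Lovász. -/
theorem exists_disjoint_col_eq (col : Finset α → β) {T : Finset β}
    (hT : ∀ S, #S = k → col S ∈ T) (hcard : #T + 2 * k ≤ Fintype.card α + 1) :
    ∃ S₁ S₂ : Finset α, Disjoint S₁ S₂ ∧ #S₁ = k ∧ #S₂ = k ∧ col S₁ = col S₂ := by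
  classical
  rcases k.eq_zero_or_pos with rfl | hk
  · exact ⟨∅, ∅, disjoint_empty_left _, card_empty, card_empty, rfl⟩
  by_contra hcol
  obtain ⟨s, hs⟩ := exists_odd_sign α
  obtain ⟨γ, hγ_neg, hγ⟩ := exists_even_isColour_or_neg k col
  have hγT : ∀ X, 2 * k ≤ #(signSupport X) + 1 → γ X ∈ T := fun X hX => by
    rcases hγ X hX with ⟨S, hS, -, hc⟩ | ⟨S, hS, -, hc⟩
    all_goals exact hc ▸ hT S hS
  have hmag : ∀ X ≠ 0, kneserMag k γ X ∈ (Ioo 0 (2 * k - 1)).disjSum T := fun X hX => by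
    rw [kneserMag]
    split_ifs with hbig
    · exact inr_mem_disjSum.2 (hγT X hbig)
    · exact inl_mem_disjSum.2 (mem_Ioo.2 ⟨(signSupport_nonempty hX).card_pos, by omega⟩)
  have hle := (isTuckerLabelling_kneser hcol hγ_neg hγ hs).card_le hmag
  rw [card_disjSum, Nat.card_Ioo] at hle
  omega

end Kneser

lemma multiset_eq_of_card_eq_of_count_eq {α : Type*} [DecidableEq α] {s t : Multiset α} (a : α)
    (hcard : s.card = t.card) (hcount : ∀ b ≠ a, s.count b = t.count b) : s = t := by
  have hadd (s : Multiset α) : s.card = s.count a + (s.filter fun b => ¬ a = b).card := by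
    rw [← Multiset.countP_eq_card_filter]
    exact s.card_eq_countP_add_countP _
  have hfilter : s.filter (fun b => ¬ a = b) = t.filter fun b => ¬ a = b := by
    refine Multiset.ext' fun b => ?_
    rw [Multiset.count_filter, Multiset.count_filter]
    split_ifs with hb
    · rfl
    · exact hcount b (Ne.symm hb)
  have ha : s.count a = t.count a := by
    have hs := hadd s
    have ht := hadd t
    rw [hfilter] at hs
    omega
  exact Multiset.ext' fun b => (eq_or_ne b a).elim (fun hb => hb ▸ ha) (hcount b)

section DistMultiset

variable {V : Type*} {G : SimpleGraph V} {S : Finset V} {t : ℕ}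

lemma card_distMultiset (G : SimpleGraph V) (S : Finset V) :
    (distMultiset G S).card = (#S).choose 2 := by
  classical
  rw [distMultiset, Multiset.card_map, card_val, sym2_eq_image]
  convert Sym2.card_image_offDiag S
  convert Sym2.filter_image_mk_not_isDiag S

lemma exists_dist_eq_of_mem_distMultiset (ht : t ∈ distMultiset G S) :
    ∃ u v, u ≠ v ∧ G.dist u v = t := by
  classical
  obtain ⟨p, hp, rfl⟩ := Multiset.mem_map.1 ht
  induction p with
  | _ u v => exact ⟨u, v, (mem_filter.1 hp).2, rfl⟩

lemma pos_of_mem_distMultiset (hG : G.Connected) (ht : t ∈ distMultiset G S) : 0 < t := by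
  obtain ⟨u, v, hne, rfl⟩ := exists_dist_eq_of_mem_distMultiset ht
  exact hG.pos_dist_of_ne hne

lemma le_diam_of_mem_distMultiset (hdiam : G.ediam ≠ ⊤) (ht : t ∈ distMultiset G S) :
    t ≤ G.diam := by
  obtain ⟨u, v, -, rfl⟩ := exists_dist_eq_of_mem_distMultiset ht
  exact SimpleGraph.dist_le_diam hdiam

lemma distMultiset_eq_of_count_eq {S₁ S₂ : Finset V} (hG : G.Connected) (hdiam : G.ediam ≠ ⊤)
    (hcard : #S₁ = #S₂) (hcount : ∀ i < G.diam - 1,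
      (distMultiset G S₁).count (i + 1) = (distMultiset G S₂).count (i + 1)) :
    distMultiset G S₁ = distMultiset G S₂ := by
  refine multiset_eq_of_card_eq_of_count_eq G.diam
    (by rw [card_distMultiset, card_distMultiset, hcard]) fun t ht => ?_
  by_cases hrange : 0 < t ∧ t < G.diam
  · have h := hcount (t - 1) (by omega)
    rwa [Nat.sub_add_cancel hrange.1] at h
  · have hzero (S : Finset V) : (distMultiset G S).count t = 0 :=
      Multiset.count_eq_zero_of_notMem fun hmem => hrange ⟨pos_of_mem_distMultiset hG hmem,
        (le_diam_of_mem_distMultiset hdiam hmem).lt_of_ne ht⟩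
    rw [hzero, hzero]

lemma le_homNumber [Finite V] {S₁ S₂ : Finset V} (h : Homometric G S₁ S₂) (hcard : #S₁ = #S₂) :
    #S₁ ≤ homNumber G := by
  have := Fintype.ofFinite V
  exact le_csSup ⟨Fintype.card V, fun _ ⟨S, _, _, hS, _⟩ => hS ▸ card_le_univ S⟩
    ⟨S₁, S₂, h, rfl, hcard.symm⟩

variable [Fintype V] {k : ℕ}

theorem exists_homometric (hG : G.Connected)
    (hcard : (k.choose 2 + 1) ^ (G.diam - 1) + 2 * k ≤ Fintype.card V + 1) :
    ∃ S₁ S₂ : Finset V, Homometric G S₁ S₂ ∧ #S₁ = k ∧ #S₂ = k := by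
  let counts (S : Finset V) (i : Fin (G.diam - 1)) : ℕ := (distMultiset G S).count ((i : ℕ) + 1)
  have hcounts : ∀ S, #S = k →
      counts S ∈ Fintype.piFinset fun _ => range (k.choose 2 + 1) := fun S hS => by
    rw [Fintype.mem_piFinset]
    intro i
    rw [mem_range_succ_iff, ← hS, ← card_distMultiset G S]
    exact Multiset.count_le_card _ _
  obtain ⟨S₁, S₂, hdisj, h₁, h₂, heq⟩ := exists_disjoint_col_eq counts hcounts
    (by rwa [Fintype.card_piFinset_const, card_range])
  have := hG.nonempty
  exact ⟨S₁, S₂, ⟨hdisj, distMultiset_eq_of_count_eq hG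
    (SimpleGraph.connected_iff_ediam_ne_top.1 hG) (h₁.trans h₂.symm)
    fun i hi => congrFun heq ⟨i, hi⟩⟩, h₁, h₂⟩

lemma choose_succ_two_add_one_pow_le {j e : ℕ} (hj : j ≠ 0) (he : e ≠ 0) :
    ((j + 1).choose 2 + 1) ^ e + 2 * (j + 1) ≤ (2 * j) ^ (2 * e) + 2 := by
  have hchoose : 2 * (j + 1).choose 2 ≤ (j + 1) * j := by
    rw [Nat.choose_two_right]
    exact Nat.mul_div_le _ _
  have hj' : 1 ≤ j := by omega
  have hbase : ((j + 1).choose 2 + 1) + 2 * j ≤ (2 * j) ^ 2 := by nlinarith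
  calc ((j + 1).choose 2 + 1) ^ e + 2 * (j + 1)
      ≤ ((j + 1).choose 2 + 1) ^ e + (2 * j) ^ e + 2 := by
        have := Nat.le_self_pow he (2 * j)
        omega
    _ ≤ ((j + 1).choose 2 + 1 + 2 * j) ^ e + 2 := by
        gcongr
        exact pow_add_pow_le (Nat.zero_le _) (Nat.zero_le _) he
    _ ≤ (2 * j) ^ (2 * e) + 2 := by
        rw [pow_mul]
        gcongr

lemma one_le_homNumber (hG : G.Connected) (hV : 2 ≤ Fintype.card V) : 1 ≤ homNumber G := by
  obtain ⟨S₁, S₂, h, h₁, h₂⟩ := exists_homometric (k := 1) hG (by simpa using by omega)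
  exact h₁ ▸ le_homNumber h (h₁.trans h₂.symm)

theorem card_le_two_mul_homNumber_pow (hG : G.Connected) (hdiam : 2 ≤ G.diam) :
    Fintype.card V ≤ (2 * homNumber G) ^ (2 * (G.diam - 1)) := by
  have := SimpleGraph.nontrivial_of_diam_ne_zero (G := G) (by omega)
  have hpos := one_le_homNumber hG Fintype.one_lt_card
  by_contra! hlt
  have hnum := choose_succ_two_add_one_pow_le (j := homNumber G) (e := G.diam - 1)
    (by omega) (by omega)
  obtain ⟨S₁, S₂, h, h₁, h₂⟩ := exists_homometric (k := homNumber G + 1) hG (by omega)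
  have hle := le_homNumber h (h₁.trans h₂.symm)
  omega

end DistMultiset

theorem stmt4_general {V : Type*} [Fintype V] (G : SimpleGraph V) (hG : G.Connected)
    (hdiam : 2 ≤ G.diam) :
    (1 / 2 : ℝ) * (Fintype.card V : ℝ) ^ ((1 : ℝ) / (2 * (G.diam : ℝ) - 2)) ≤ homNumber G := by
  have hexp : 2 * (G.diam : ℝ) - 2 = (2 * (G.diam - 1) : ℕ) := by
    push_cast [Nat.cast_sub (show 1 ≤ G.diam by omega)]
    ring
  have hroot : (Fintype.card V : ℝ) ^ ((1 : ℝ) / (2 * (G.diam : ℝ) - 2)) ≤ 2 * homNumber G := by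
    rw [hexp, one_div, Real.rpow_inv_le_iff_of_pos (by positivity) (by positivity)
      (by rw [Nat.cast_pos]; omega), Real.rpow_natCast]
    exact_mod_cast card_le_two_mul_homNumber_pow hG hdiam
  linarith

/-- If `G` is connected on `n` vertices with diameter `d ≥ 2` and `n ≥ d^(2d−2)`,
then `h(G) ≥ (1/2)·n^(1/(2d−2))`. -/
theorem stmt4 {V : Type*} [Fintype V] (G : SimpleGraph V) (hG : G.Connected)
    (n d : ℕ) (hn : Fintype.card V = n) (hd : G.diam = d) (hd2 : 2 ≤ d)
    (hbig : d ^ (2 * d - 2) ≤ n) :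
    (1 / 2 : ℝ) * (n : ℝ) ^ ((1 : ℝ) / (2 * (d : ℝ) - 2)) ≤ homNumber G := by
  subst hn hd
  exact stmt4_general G hG hd2
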